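/- Let f : Ω → ℝ ∪ {+∞} be Borel measurable and bounded from below, and suppose f ≤ (ϑ·S)_T + g(S_T) pointwise on Ω, where ϑ = (ϑ₂,…,ϑ_T) with each ϑ_t : (0,∞)^{t−1} → ℝ Borel measurable, and g : (0,∞) → ℝ ∪ {+∞} is Borel measurable, bounded from below, with φ(g) ≤ 0. Then ∫ f dμ ≤ 0 for every μ ∈ ℳ(𝒬). -/

import Mathlib

/-! The gain `M = (ϑ·S)_T` is only a generalised martingale, so `E[M] = 0` is not automatic.
Since `f` is bounded from below and `∫ g(S_T) dμ ≤ φ(g) ≤ 0`, the inequality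
`f ≤ M + g(S_T)` forces `M⁻ ≤ f⁻ + g(S_T)⁺`, which is integrable; and a martingale transform whose
terminal negative part is integrable satisfies `E[M⁺] ≤ E[M⁻]`.

The latter is `lintegral_transform`, proved by induction on the number of steps. Its engine is
the identity `E[1_B (X + φ d)⁺] + E[1_B X⁻] = E[1_B (X + φ d)⁻] + E[1_B X⁺]` in `[0,∞]`
(`transform_step`), for `X`, `φ`, `B` measurable with respect to the past and `d` an integrable
increment with vanishing conditional expectation. It is clear where `X` and `φ` are bounded, and
follows in general by summing over the pieces on which `⌊|X| + |φ|⌋` is constant. With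
`B = {X < 0}` it shows that integrability of the negative part passes back to earlier times; with
`B` the whole space it gives the induction step.

All integrals of signed quantities are handled as pairs of `[0,∞]`-valued integrals, so that
infinite values need no separate treatment. -/

open MeasureTheory Filter ENNReal NNReal

/-- Positive part of an extended real number, as an element of `[0,∞]`. -/
noncomputable def ERealPosPart (x : EReal) : ℝ≥0∞ :=
  if x = ⊤ then ⊤ else ENNReal.ofReal x.toReal

/-- The pairing `⟨f,μ⟩ = ∫ f dμ` for an extended-real-valued function `f`; for `f` bounded
from below and `μ` a finite measure this is the usual (extended-valued) integral. -/
noncomputable def ePair {Ω : Type*} [MeasurableSpace Ω] (f : Ω → EReal) (μ : Measure Ω) :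
    EReal :=
  ((∫⁻ x, ERealPosPart (f x) ∂μ : ℝ≥0∞) : EReal) -
    ((∫⁻ x, ERealPosPart (-f x) ∂μ : ℝ≥0∞) : EReal)

/-- The positive half line `(0,∞)`, the state space of the asset at a single time. -/
abbrev Rpos : Type := ↥(Set.Ioi (0 : ℝ))

/-- The path space `Ω = (0,∞)^T`. -/
abbrev PathSpace (T : ℕ) : Type := Fin T → Rpos

/-- The discounted price process: the canonical coordinate process on `(0,∞)^T`,
viewed as a real-valued process. -/
def priceProcess (T : ℕ) : Fin T → PathSpace T → ℝ := fun t ω => (ω t : ℝ)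

/-- The natural filtration of the coordinate process on `(0,∞)^T`. -/
noncomputable def naturalFiltration (T : ℕ) :
    Filtration (Fin T) (inferInstance : MeasurableSpace (PathSpace T)) :=
  Filtration.natural (priceProcess T)
    (fun i => (measurable_subtype_coe.comp (measurable_pi_apply i)).stronglyMeasurable)

/-- The discrete-time stochastic integral
`(ϑ·S)_T(ω) = ∑_{t=2}^T ϑ_t(ω₁,…,ω_{t−1}) (ω_t − ω_{t−1})`, where the strategy
`ϑ_t : (0,∞)^{t−1} → ℝ` (here indexed by `Fin T` with `t` ranging over the nonzero
indices, each `ϑ t` being a function of the first `t` coordinates `ω_0, …, ω_{t-1}`). -/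
def stochInt {T : ℕ} (ϑ : (t : Fin T) → ((Fin (t : ℕ)) → Rpos) → ℝ)
    (ω : PathSpace T) : ℝ :=
  ∑ t : Fin T,
    if (t : ℕ) ≠ 0 then
      ϑ t (fun k => ω (Fin.castLE t.isLt.le k)) *
        ((ω t : ℝ) - (ω ⟨(t : ℕ) - 1, lt_of_le_of_lt (Nat.sub_le _ _) t.isLt⟩ : ℝ))
    else 0

/-- The sublinear pricing functional `φ(g) = sup_{μ ∈ 𝒬} ∫ g dμ` for plain vanilla
options `g(S_T)`. -/
noncomputable def vanillaPrice (Q : Set (FiniteMeasure Rpos)) (g : Rpos → EReal) : EReal :=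
  sSup {x : EReal | ∃ q ∈ Q, x = ePair g (q : Measure Rpos)}

/-! ### Generalised martingale transforms -/

section Transform

variable {Ω : Type*} {m0 : MeasurableSpace Ω}

lemma transform_step_bdd {μ : Measure Ω} [IsProbabilityMeasure μ] {m : MeasurableSpace Ω}
    (hm : m ≤ m0) {X φ d : Ω → ℝ} (hX : Measurable[m] X) (hφ : Measurable[m] φ)
    (hd : Integrable d μ) (hd0 : μ[d|m] =ᵐ[μ] 0) {A : Set Ω} (hA : MeasurableSet[m] A)
    (K : ℝ) (hXK : ∀ ω ∈ A, |X ω| ≤ K) (hφK : ∀ ω ∈ A, |φ ω| ≤ K) :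
    (∫⁻ ω in A, ENNReal.ofReal (X ω + φ ω * d ω) ∂μ) + ∫⁻ ω in A, ENNReal.ofReal (-X ω) ∂μ
      = (∫⁻ ω in A, ENNReal.ofReal (-(X ω + φ ω * d ω)) ∂μ)
        + ∫⁻ ω in A, ENNReal.ofReal (X ω) ∂μ := by
  have hXi : IntegrableOn X A μ := by
    refine Measure.integrableOn_of_bounded (M := K) (measure_ne_top _ _)
      (hX.mono hm le_rfl).aestronglyMeasurable ?_
    filter_upwards [ae_restrict_mem (hm _ hA)] with ω hω using hXK ω hω
  have hψm : StronglyMeasurable[m] (A.indicator φ) := (hφ.indicator hA).stronglyMeasurable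
  have hψd : Integrable (A.indicator φ * d) μ := by
    refine hd.bdd_mul (c := |K|) (hψm.mono hm).aestronglyMeasurable (ae_of_all _ fun ω => ?_)
    by_cases hω : ω ∈ A
    · simpa [hω] using (hφK ω hω).trans (le_abs_self K)
    · simp [hω]
  have hzero : ∫ ω, (A.indicator φ * d) ω ∂μ = 0 := by
    rw [← integral_condExp hm]
    rw [integral_congr_ae (g := fun _ => (0 : ℝ))]
    · simp
    filter_upwards [condExp_mul_of_stronglyMeasurable_left hψm hψd hd, hd0] with ω h1 h2
    rw [h1]; simp [h2]
  have hind : A.indicator φ * d = A.indicator (fun ω => φ ω * d ω) := by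
    ext ω; by_cases hω : ω ∈ A <;> simp [hω]
  have hDi : IntegrableOn (fun ω => φ ω * d ω) A μ := by
    rw [← integrable_indicator_iff (hm _ hA), ← hind]; exact hψd
  have hD0 : ∫ ω in A, φ ω * d ω ∂μ = 0 := by
    rw [← integral_indicator (hm _ hA), ← hind]; exact hzero
  have hYi : IntegrableOn (fun ω => X ω + φ ω * d ω) A μ := hXi.add hDi
  have hY : ∫ ω in A, X ω + φ ω * d ω ∂μ = ∫ ω in A, X ω ∂μ := by
    rw [integral_add hXi hDi, hD0, add_zero]
  rw [integral_eq_lintegral_pos_part_sub_lintegral_neg_part hYi,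
    integral_eq_lintegral_pos_part_sub_lintegral_neg_part hXi] at hY
  have h1 := hYi.lintegral_lt_top.ne
  have h2 := hYi.neg.lintegral_lt_top.ne
  have h3 := hXi.lintegral_lt_top.ne
  have h4 := hXi.neg.lintegral_lt_top.ne
  simp only [Pi.neg_apply] at h2 h4
  rw [← ENNReal.toReal_eq_toReal_iff' (by finiteness) (by finiteness),
    ENNReal.toReal_add h1 h4, ENNReal.toReal_add h2 h3]
  linarith

/-- The one-step identity `E[1_B Y⁺] + E[1_B X⁻] = E[1_B Y⁻] + E[1_B X⁺]` for `Y = X + φ d`,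
valid in `[0,∞]` without any integrability of `X` or `φ d`. -/
lemma transform_step {μ : Measure Ω} [IsProbabilityMeasure μ] {m : MeasurableSpace Ω}
    (hm : m ≤ m0) {X φ d : Ω → ℝ} (hX : Measurable[m] X) (hφ : Measurable[m] φ)
    (hd : Integrable d μ) (hd0 : μ[d|m] =ᵐ[μ] 0) {B : Set Ω} (hB : MeasurableSet[m] B) :
    (∫⁻ ω in B, ENNReal.ofReal (X ω + φ ω * d ω) ∂μ) + ∫⁻ ω in B, ENNReal.ofReal (-X ω) ∂μ
      = (∫⁻ ω in B, ENNReal.ofReal (-(X ω + φ ω * d ω)) ∂μ)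
        + ∫⁻ ω in B, ENNReal.ofReal (X ω) ∂μ := by
  let h : Ω → ℕ := fun ω => ⌊|X ω| + |φ ω|⌋₊
  have hh : Measurable[m] h := by
    have h1 : Measurable[m] (fun ω => |X ω| + |φ ω|) := by fun_prop
    exact Nat.measurable_floor.comp h1
  have hA : ∀ k, MeasurableSet[m] (B ∩ h ⁻¹' {k}) := fun k =>
    hB.inter (hh (measurableSet_singleton k))
  have hU : (⋃ k, B ∩ h ⁻¹' {k}) = B := by
    ext ω; simp
  have hdisj : Pairwise (Function.onFun Disjoint fun k => B ∩ h ⁻¹' {k}) := by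
    intro i j hij
    refine Set.disjoint_left.2 fun ω h1 h2 => hij ?_
    have e1 : h ω = i := h1.2
    have e2 : h ω = j := h2.2
    exact e1.symm.trans e2
  have key : ∀ F : Ω → ℝ≥0∞,
      ∫⁻ ω in B, F ω ∂μ = ∑' k, ∫⁻ ω in B ∩ h ⁻¹' {k}, F ω ∂μ := by
    intro F
    conv_lhs => rw [← hU]
    exact lintegral_iUnion (fun k => hm _ (hA k)) hdisj F
  simp only [key, ← ENNReal.tsum_add]
  congr 1
  ext k
  have hbd : ∀ ω ∈ B ∩ h ⁻¹' {k}, |X ω| + |φ ω| ≤ k + 1 := by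
    intro ω hω
    have e : h ω = k := hω.2
    have := Nat.lt_floor_add_one (|X ω| + |φ ω|)
    change _ < ((h ω : ℕ) : ℝ) + 1 at this
    rw [e] at this
    exact this.le
  refine transform_step_bdd hm hX hφ hd hd0 (hA k) (k + 1) ?_ ?_
  · intro ω hω
    linarith [hbd ω hω, abs_nonneg (φ ω)]
  · intro ω hω
    linarith [hbd ω hω, abs_nonneg (X ω)]

lemma lintegral_neg_part_step {μ : Measure Ω} [IsProbabilityMeasure μ] {m : MeasurableSpace Ω}
    (hm : m ≤ m0) {X φ d : Ω → ℝ} (hX : Measurable[m] X) (hφ : Measurable[m] φ)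
    (hd : Integrable d μ) (hd0 : μ[d|m] =ᵐ[μ] 0) :
    ∫⁻ ω, ENNReal.ofReal (-X ω) ∂μ ≤ ∫⁻ ω, ENNReal.ofReal (-(X ω + φ ω * d ω)) ∂μ := by
  have hB : MeasurableSet[m] {ω | X ω < 0} := measurableSet_lt hX measurable_const
  have h := transform_step (μ := μ) hm hX hφ hd hd0 hB
  have h0 : ∫⁻ ω in {ω | X ω < 0}, ENNReal.ofReal (X ω) ∂μ = 0 := by
    rw [setLIntegral_congr_fun (g := fun _ => 0) (hm _ hB), lintegral_zero]
    intro ω hω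
    exact ENNReal.ofReal_of_nonpos (le_of_lt hω)
  have h1 : ∫⁻ ω, ENNReal.ofReal (-X ω) ∂μ
      = ∫⁻ ω in {ω | X ω < 0}, ENNReal.ofReal (-X ω) ∂μ := by
    rw [← lintegral_indicator (hm _ hB)]
    congr 1
    ext ω
    by_cases hω : X ω < 0
    · simp [hω]
    · simp [hω, ENNReal.ofReal_of_nonpos (neg_nonpos.2 (not_lt.1 hω))]
  rw [h0, add_zero] at h
  rw [h1]
  calc _ ≤ _ := le_add_self
    _ = _ := h
    _ ≤ _ := setLIntegral_le_lintegral _ _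

/-- A martingale transform `M = ∑ φ_i d_i` with `E[M⁻] < ∞` satisfies `E[M⁺] ≤ E[M⁻]`. -/
lemma lintegral_transform {μ : Measure Ω} [IsProbabilityMeasure μ]
    {ℱ : ℕ → MeasurableSpace Ω} (hmono : Monotone ℱ) (hℱ : ∀ i, ℱ i ≤ m0)
    {φ d : ℕ → Ω → ℝ} (hφ : ∀ i, Measurable[ℱ i] (φ i)) (hdm : ∀ i, Measurable[ℱ (i + 1)] (d i))
    (hd : ∀ i, Integrable (d i) μ) (hd0 : ∀ i, μ[d i|ℱ i] =ᵐ[μ] 0) (n : ℕ)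
    (hfin : ∫⁻ ω, ENNReal.ofReal (-∑ i ∈ Finset.range n, φ i ω * d i ω) ∂μ ≠ ⊤) :
    ∫⁻ ω, ENNReal.ofReal (∑ i ∈ Finset.range n, φ i ω * d i ω) ∂μ
      ≤ ∫⁻ ω, ENNReal.ofReal (-∑ i ∈ Finset.range n, φ i ω * d i ω) ∂μ := by
  induction n with
  | zero => simp
  | succ n ih =>
    have hX : Measurable[ℱ n] (fun ω => ∑ i ∈ Finset.range n, φ i ω * d i ω) := by
      refine Finset.measurable_fun_sum _ fun i hi => ?_
      have hi' : i < n := Finset.mem_range.1 hi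
      exact ((hφ i).mono (hmono hi'.le) le_rfl).mul ((hdm i).mono (hmono hi') le_rfl)
    simp only [Finset.sum_range_succ] at hfin ⊢
    have h1 := lintegral_neg_part_step (hℱ n) hX (hφ n) (hd n) (hd0 n)
    have hXfin := ne_top_of_le_ne_top hfin h1
    have h2 := ih hXfin
    have h3 := transform_step (μ := μ) (hℱ n) hX (hφ n) (hd n) (hd0 n) MeasurableSet.univ
    simp only [Measure.restrict_univ] at h3
    rw [← ENNReal.add_le_add_iff_right hXfin, h3]
    gcongr

end Transform

/-! ### The semistatic hedge -/

lemma measurable_ERealPosPart : Measurable ERealPosPart :=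
  Measurable.ite (measurableSet_singleton _) measurable_const
    (ENNReal.measurable_ofReal.comp measurable_ereal_toReal)

lemma lintegral_ERealPosPart_neg_ne_top {α : Type*} [MeasurableSpace α] {μ : Measure α}
    [IsProbabilityMeasure μ] {f : α → EReal} {c : ℝ} (hc : ∀ x, (c : EReal) ≤ f x) :
    ∫⁻ x, ERealPosPart (-f x) ∂μ ≠ ⊤ := by
  refine ne_top_of_le_ne_top (b := ∫⁻ _, ENNReal.ofReal (-c) ∂μ) (by simp) ?_
  refine lintegral_mono fun x => ?_
  have h := hc x
  generalize f x = y at h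
  induction y with
  | bot => simp at h
  | top => simp [ERealPosPart]
  | coe y =>
    rw [← EReal.coe_neg]
    simp only [ERealPosPart, EReal.coe_ne_top, if_false, EReal.toReal_coe]
    exact ENNReal.ofReal_le_ofReal (neg_le_neg (EReal.coe_le_coe_iff.1 h))

/-- The positive and negative parts are arranged so that `a ≤ x + b` becomes an inequality of
sums in `[0,∞]`, together with the domination `x⁻ ≤ a⁻ + b⁺`. -/
lemma posPart_hedge {a b : EReal} {x : ℝ} (ha : a ≠ ⊥) (hb : b ≠ ⊥) (h : a ≤ (x : EReal) + b) :
    ERealPosPart a + (ENNReal.ofReal (-x) + ERealPosPart (-b))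
        ≤ ERealPosPart (-a) + (ENNReal.ofReal x + ERealPosPart b)
      ∧ ENNReal.ofReal (-x) ≤ ERealPosPart (-a) + ERealPosPart b := by
  induction b with
  | bot => simp at hb
  | top => simp [ERealPosPart]
  | coe b =>
    induction a with
    | bot => simp at ha
    | top =>
      rw [← EReal.coe_add] at h
      exact absurd (top_le_iff.1 h) (EReal.coe_ne_top _)
    | coe a =>
      rw [← EReal.coe_add, EReal.coe_le_coe_iff] at h
      rw [← EReal.coe_neg, ← EReal.coe_neg]
      simp only [ERealPosPart, EReal.coe_ne_top, if_false, EReal.toReal_coe]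
      simp only [ENNReal.ofReal, ← ENNReal.coe_add, ENNReal.coe_le_coe]
      simp only [← NNReal.coe_le_coe, NNReal.coe_add, Real.coe_toNNReal']
      constructor
      · have e : ∀ y : ℝ, max y 0 - max (-y) 0 = y := max_zero_sub_eq_self
        linarith [e a, e b, e x]
      · refine max_le ?_ (by positivity)
        linarith [le_max_left (-a) 0, le_max_left b 0]

/-- `lintegral_transform` for the gain `M = (ϑ·S)_T` of a trading strategy. -/
lemma lintegral_stochInt {T : ℕ} (hT : 2 ≤ T)
    {ϑ : (t : Fin T) → ((Fin (t : ℕ)) → Rpos) → ℝ} (hϑ : ∀ t, Measurable (ϑ t))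
    {μ : Measure (PathSpace T)} [IsProbabilityMeasure μ]
    (hmart : Martingale (priceProcess T) (naturalFiltration T) μ)
    (hfin : ∫⁻ ω, ENNReal.ofReal (-stochInt ϑ ω) ∂μ ≠ ⊤) :
    ∫⁻ ω, ENNReal.ofReal (stochInt ϑ ω) ∂μ ≤ ∫⁻ ω, ENNReal.ofReal (-stochInt ϑ ω) ∂μ := by
  obtain ⟨N, rfl⟩ : ∃ N, T = N + 1 := ⟨T - 1, by omega⟩
  -- The time index is extended to all of `ℕ` by freezing the process after the horizon.
  let τ : ℕ → Fin (N + 1) := fun i => ⟨min i N, by omega⟩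
  have hτ : Monotone τ := fun i j hij => Fin.mk_le_mk.2 (min_le_min_right N hij)
  let d : ℕ → PathSpace (N + 1) → ℝ := fun i =>
    priceProcess (N + 1) (τ (i + 1)) - priceProcess (N + 1) (τ i)
  let φ : ℕ → PathSpace (N + 1) → ℝ := fun i ω =>
    if h : i + 1 < N + 1 then
      ϑ ⟨i + 1, h⟩ (fun k => ω (Fin.castLE (Fin.isLt ⟨i + 1, h⟩).le k)) else 0
  have hsum : ∀ ω, stochInt ϑ ω = ∑ i ∈ Finset.range N, φ i ω * d i ω := by
    intro ω
    rw [stochInt, Fin.sum_univ_succ, Finset.sum_range]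
    simp only [Fin.val_zero, ne_eq, not_true_eq_false, if_false, zero_add]
    refine Finset.sum_congr rfl fun i _ => ?_
    have hi : (i : ℕ) + 1 < N + 1 := by omega
    have e1 : τ (i + 1) = i.succ := by ext; simp [τ]
    have e2 : τ i = ⟨(i.succ : ℕ) - 1, by simp⟩ := by ext; simp [τ]
    simp only [φ, d, dif_pos hi, Pi.sub_apply, e1, e2, priceProcess]
    simp only [Fin.val_succ, Nat.add_eq_zero_iff, one_ne_zero, and_false, not_false_eq_true,
      if_true]
    rfl
  have hmono : Monotone fun i => naturalFiltration (N + 1) (τ i) := fun i j hij =>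
    (naturalFiltration (N + 1)).mono (hτ hij)
  have hcoord : ∀ i : ℕ, ∀ s : Fin (N + 1), s ≤ τ i →
      Measurable[naturalFiltration (N + 1) (τ i)] (priceProcess (N + 1) s) := fun i s hs =>
    ((hmart.stronglyAdapted s).measurable).mono ((naturalFiltration (N + 1)).mono hs) le_rfl
  simp only [hsum] at hfin ⊢
  refine lintegral_transform hmono (fun i => (naturalFiltration (N + 1)).le _) ?_ ?_ ?_ ?_ N hfin
  · intro i
    by_cases h : i + 1 < N + 1
    · simp only [φ, dif_pos h]
      refine (hϑ _).comp ?_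
      refine @measurable_pi_lambda _ _ _ (naturalFiltration (N + 1) (τ i)) _ _ fun k => ?_
      refine Measurable.subtype_mk
        (f := fun ω : PathSpace (N + 1) => priceProcess (N + 1) (Fin.castLE (by omega) k) ω)
        (hcoord i _ ?_)
      have := k.isLt
      rw [Fin.le_def]
      simp [τ]; omega
    · simp only [φ, dif_neg h]
      exact measurable_const
  · intro i
    exact (hcoord (i + 1) _ le_rfl).sub (hcoord (i + 1) _ (hτ i.le_succ))
  · intro i
    exact (hmart.integrable _).sub (hmart.integrable _)
  · intro i
    have h1 := condExp_sub (hmart.integrable (τ (i + 1))) (hmart.integrable (τ i))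
      (naturalFiltration (N + 1) (τ i))
    filter_upwards [h1, hmart.condExp_ae_eq (hτ i.le_succ), hmart.condExp_ae_eq (le_refl (τ i))]
      with ω a b c
    change (μ[d i | _]) ω = 0
    simp only [d]
    rw [a, Pi.sub_apply, b, c, sub_self]

/-- **Part of Proposition 5.1** in Bartl–Kupper, "A pointwise bipolar theorem" (the easy
inclusion of the superhedging duality for semistatic hedging in discrete time): let
`T ≥ 2`, `Ω = (0,∞)^T` with coordinate process `S`, and let `𝒬` be a nonempty convex
weakly compact set of Borel probability measures on `(0,∞)`.  If `f : Ω → ℝ ∪ {+∞}` is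
Borel measurable, bounded from below, and `f ≤ (ϑ·S)_T + g(S_T)` pointwise for a trading
strategy `(ϑ, g)` (each `ϑ_t : (0,∞)^{t−1} → ℝ` Borel measurable, `g : (0,∞) → ℝ ∪ {+∞}`
Borel measurable, bounded from below, with `φ(g) ≤ 0`), then `∫ f dμ ≤ 0` for every
`μ ∈ ℳ(𝒬)`, i.e. every Borel probability measure `μ` on `Ω` making `S` an integrable
martingale with respect to its natural filtration and whose law of `S_T` lies in `𝒬`. -/
theorem semistatic_superhedging
    (T : ℕ) (hT : 2 ≤ T)
    (Q : Set (FiniteMeasure Rpos)) (hQne : Q.Nonempty)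
    (hQprob : ∀ q ∈ Q, IsProbabilityMeasure (q : Measure Rpos))
    (hQconv : ∀ q₁ ∈ Q, ∀ q₂ ∈ Q, ∀ t : ℝ≥0, t ≤ 1 → t • q₁ + (1 - t) • q₂ ∈ Q)
    (hQcompact : IsCompact Q)
    (f : PathSpace T → EReal) (hfmeas : Measurable f)
    (hfbdd : ∃ c : ℝ, ∀ ω, (c : EReal) ≤ f ω)
    (ϑ : (t : Fin T) → ((Fin (t : ℕ)) → Rpos) → ℝ)
    (hϑ : ∀ t, Measurable (ϑ t))
    (g : Rpos → EReal) (hgmeas : Measurable g)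
    (hgbdd : ∃ c : ℝ, ∀ x, (c : EReal) ≤ g x)
    (hgprice : vanillaPrice Q g ≤ 0)
    (hhedge : ∀ ω, f ω ≤ ((stochInt ϑ ω : ℝ) : EReal) + g (ω ⟨T - 1, by omega⟩))
    (μ : Measure (PathSpace T)) (hμprob : IsProbabilityMeasure μ)
    (hint : ∀ t, Integrable (priceProcess T t) μ)
    (hmart : Martingale (priceProcess T) (naturalFiltration T) μ)
    (hlaw : ∃ q ∈ Q, (q : Measure Rpos) = μ.map (fun ω => ω ⟨T - 1, by omega⟩)) :
    ePair f μ ≤ 0 := by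
  obtain ⟨cf, hcf⟩ := hfbdd
  obtain ⟨cg, hcg⟩ := hgbdd
  obtain ⟨q, hqQ, hq⟩ := hlaw
  have := hQprob q hqQ
  have hlast : Measurable (fun ω : PathSpace T => ω ⟨T - 1, by omega⟩) := measurable_pi_apply _
  have hgm : ∫⁻ x, ERealPosPart (-g x) ∂(q : Measure Rpos) ≠ ⊤ :=
    lintegral_ERealPosPart_neg_ne_top hcg
  have hfm : ∫⁻ ω, ERealPosPart (-f ω) ∂μ ≠ ⊤ := lintegral_ERealPosPart_neg_ne_top hcf
  have hg : ∫⁻ x, ERealPosPart (g x) ∂(q : Measure Rpos)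
      ≤ ∫⁻ x, ERealPosPart (-g x) ∂(q : Measure Rpos) := by
    have h : ePair g (q : Measure Rpos) ≤ 0 := by
      refine le_trans ?_ hgprice
      unfold vanillaPrice
      exact le_sSup ⟨q, hqQ, rfl⟩
    rw [ePair, EReal.sub_nonpos] at h
    exact EReal.coe_ennreal_le_coe_ennreal_iff.1 h
  have hpg := measurable_ERealPosPart.comp hgmeas
  have hng := measurable_ERealPosPart.comp hgmeas.neg
  have hpf := measurable_ERealPosPart.comp hfmeas
  have hnf := measurable_ERealPosPart.comp hfmeas.neg
  simp only [Function.comp_def, Pi.neg_apply] at hpg hng hpf hnf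
  rw [hq, lintegral_map hng hlast] at hgm
  rw [hq, lintegral_map hng hlast, lintegral_map hpg hlast] at hg
  have hgp := ne_top_of_le_ne_top hgm hg
  have hM : Measurable (stochInt ϑ) := by
    unfold stochInt
    refine Finset.measurable_fun_sum _ fun t _ => ?_
    split_ifs
    · refine ((hϑ t).comp (by fun_prop)).mul (Measurable.sub ?_ ?_) <;>
        exact measurable_subtype_coe.comp (measurable_pi_apply _)
    · exact measurable_const
  have hpt := fun ω => posPart_hedge (ne_bot_of_le_ne_bot (EReal.coe_ne_bot _) (hcf ω))
    (ne_bot_of_le_ne_bot (EReal.coe_ne_bot _) (hcg _)) (hhedge ω)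
  have hMm : ∫⁻ ω, ENNReal.ofReal (-stochInt ϑ ω) ∂μ ≠ ⊤ := by
    refine ne_top_of_le_ne_top ?_ (lintegral_mono fun ω => (hpt ω).2)
    rw [lintegral_add_left hnf]
    finiteness
  have hMp := lintegral_stochInt hT hϑ hmart hMm
  have htot := lintegral_mono (μ := μ) fun ω => (hpt ω).1
  rw [lintegral_add_left hpf, lintegral_add_left (f := fun ω => ENNReal.ofReal (-stochInt ϑ ω)) hM.neg.ennreal_ofReal,
    lintegral_add_left hnf, lintegral_add_left hM.ennreal_ofReal] at htot
  rw [ePair, EReal.sub_nonpos, EReal.coe_ennreal_le_coe_ennreal_iff]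
  refine (ENNReal.add_le_add_iff_right (ENNReal.add_ne_top.2 ⟨hMm, hgm⟩)).1 (htot.trans ?_)
  gcongr
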